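/- Let X and Y be finite nonempty sets, let c be a natural number and γ > 0, let f : X × Y → {-1,1}, and suppose there exists π : X × Y → {-1,1} that is constant on each rectangle of some partition of X × Y into at most 2^c combinatorial rectangles, with E_{x,y}[f(x,y)·π(x,y)] ≥ 2γ (x, y independent uniform). Then γ ≤ 2^c · R₂(f)^{1/4}; equivalently, R₂(f) ≥ (γ · 2^{-c})⁴. (This is the statement that any f computable by a 2-party distributional communication protocol of cost c and bias γ, in the sense of rectangle partitions, has 2-party norm at least (γ·2^{-c})⁴.) -/

import Mathlib

/-!
Write `π = ∑ i, s i · 1_{A i} · 1_{B i}` over the at most `2^c` rectangles of the partition, with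
`s i = ±1` the value of `π` on the `i`-th one. The correlation of `f` with `π` is then a sum of at
most `2^c` correlations of `f` with product functions `u x * v y` satisfying `|u|, |v| ≤ 1`.
Two applications of Cauchy–Schwarz, which eliminate first `u` and then `v`, bound each of these by
`R₂(f)^{1/4}` (`sum_mul_rect_pow_four_le`). Adding up gives `2γ ≤ 2^c · R₂(f)^{1/4}`, which is
even stronger than the claim by a factor of `2`.
-/

open Finset

/-- The 2-party norm of `f : X × Y → ℝ`. -/
noncomputable def R2 {X Y : Type*} [Fintype X] [Fintype Y] (f : X × Y → ℝ) : ℝ :=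
  (∑ x : X, ∑ x' : X, ∑ y : Y, ∑ y' : Y,
      f (x, y) * f (x, y') * f (x', y) * f (x', y')) /
    ((Fintype.card X : ℝ) ^ 2 * (Fintype.card Y : ℝ) ^ 2)

/-- `π : X × Y → ℝ` is constant on each rectangle of some partition of `X × Y`
into at most `2^c` combinatorial rectangles `A i × B i`. -/
def ConstantOnRectPartition {X Y : Type*} (c : ℕ) (π : X × Y → ℝ) : Prop :=
  ∃ (k : ℕ), k ≤ 2 ^ c ∧
    ∃ (A : Fin k → Set X) (B : Fin k → Set Y),
      (∀ p : X × Y, ∃! i : Fin k, p.1 ∈ A i ∧ p.2 ∈ B i) ∧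
      (∀ i : Fin k, ∀ p q : X × Y,
        p.1 ∈ A i → p.2 ∈ B i → q.1 ∈ A i → q.2 ∈ B i → π p = π q)

/-- The sum defining `R2 f`, as the squared Frobenius norm of the Gram matrix of the columns
of `f`. -/
lemma four_cycle_sum_eq {X Y : Type*} [Fintype X] [Fintype Y] (f : X × Y → ℝ) :
    (∑ x : X, ∑ x' : X, ∑ y : Y, ∑ y' : Y,
      f (x, y) * f (x, y') * f (x', y) * f (x', y')) =
    ∑ q : Y × Y, (∑ x : X, f (x, q.1) * f (x, q.2)) ^ 2 := by
  have h : (∑ x : X, ∑ x' : X, ∑ y : Y, ∑ y' : Y,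
      f (x, y) * f (x, y') * f (x', y) * f (x', y')) =
      ∑ p : X × X, ∑ q : Y × Y, f (p.1, q.1) * f (p.1, q.2) * f (p.2, q.1) * f (p.2, q.2) := by
    simp only [Fintype.sum_prod_type]
  rw [h, Finset.sum_comm]
  refine Finset.sum_congr rfl fun q _ => ?_
  rw [sq, Finset.sum_mul_sum, Fintype.sum_prod_type]
  exact Finset.sum_congr rfl fun x _ => Finset.sum_congr rfl fun x' _ => by ring

lemma R2_nonneg {X Y : Type*} [Fintype X] [Fintype Y] (f : X × Y → ℝ) : 0 ≤ R2 f := by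
  unfold R2
  rw [four_cycle_sum_eq]
  positivity

/-- `(∑ a b)² ≤ n ∑ b²` for weights `|a| ≤ 1`. -/
lemma sq_sum_mul_le_card_mul {ι : Type*} [Fintype ι] (a b : ι → ℝ) (ha : ∀ i, a i ^ 2 ≤ 1) :
    (∑ i, a i * b i) ^ 2 ≤ Fintype.card ι * ∑ i, b i ^ 2 := by
  refine (Finset.sum_mul_sq_le_sq_mul_sq univ a b).trans ?_
  refine mul_le_mul_of_nonneg_right ?_ (Finset.sum_nonneg fun i _ => sq_nonneg _)
  simpa using Finset.sum_le_card_nsmul univ (fun i => a i ^ 2) 1 fun i _ => ha i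

/-- The correlation of `f` with a bounded product function is at most `R₂(f)^{1/4}`
(stated without normalisation and raised to the fourth power). -/
lemma sum_mul_rect_pow_four_le {X Y : Type*} [Fintype X] [Fintype Y] [Nonempty X] [Nonempty Y]
    (f : X × Y → ℝ) (u : X → ℝ) (v : Y → ℝ) (hu : ∀ x, u x ^ 2 ≤ 1) (hv : ∀ y, v y ^ 2 ≤ 1) :
    (∑ x, u x * ∑ y, v y * f (x, y)) ^ 4 ≤
      ((Fintype.card X : ℝ) * Fintype.card Y) ^ 4 * R2 f := by
  have hX : (0 : ℝ) < Fintype.card X := by exact_mod_cast Fintype.card_pos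
  have hY : (0 : ℝ) < Fintype.card Y := by exact_mod_cast Fintype.card_pos
  have h1 := sq_sum_mul_le_card_mul u (fun x => ∑ y, v y * f (x, y)) hu
  have h2 : ∑ x, (∑ y, v y * f (x, y)) ^ 2 =
      ∑ q : Y × Y, (v q.1 * v q.2) * ∑ x, f (x, q.1) * f (x, q.2) := by
    simp only [Finset.mul_sum]
    rw [Finset.sum_comm (s := (univ : Finset (Y × Y)))]
    refine Finset.sum_congr rfl fun x _ => ?_
    rw [sq, Finset.sum_mul_sum, Fintype.sum_prod_type]
    exact Finset.sum_congr rfl fun y _ => Finset.sum_congr rfl fun y' _ => by ring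
  have h3 := sq_sum_mul_le_card_mul (fun q : Y × Y => v q.1 * v q.2)
    (fun q => ∑ x, f (x, q.1) * f (x, q.2))
    (fun q => by
      rw [mul_pow]
      exact mul_le_one₀ (hv _) (sq_nonneg _) (hv _))
  rw [← h2, ← four_cycle_sum_eq, Fintype.card_prod, Nat.cast_mul] at h3
  calc (∑ x, u x * ∑ y, v y * f (x, y)) ^ 4
      = ((∑ x, u x * ∑ y, v y * f (x, y)) ^ 2) ^ 2 := by ring
    _ ≤ (Fintype.card X * ∑ x, (∑ y, v y * f (x, y)) ^ 2) ^ 2 :=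
        pow_le_pow_left₀ (sq_nonneg _) h1 2
    _ = (Fintype.card X : ℝ) ^ 2 * (∑ x, (∑ y, v y * f (x, y)) ^ 2) ^ 2 := by ring
    _ ≤ (Fintype.card X : ℝ) ^ 2 * _ := mul_le_mul_of_nonneg_left h3 (by positivity)
    _ = ((Fintype.card X : ℝ) * Fintype.card Y) ^ 4 * R2 f := by
        unfold R2
        field_simp

/-- If a `±1`-valued `f` is computed with bias `γ` by a cost-`c` 2-party distributional
communication protocol (in the sense of rectangle partitions), then
`γ ≤ 2^c · R₂(f)^{1/4}`; equivalently `R₂(f) ≥ (γ·2^{-c})⁴`. -/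
theorem stmt_4 {X Y : Type*} [Fintype X] [Fintype Y] [Nonempty X] [Nonempty Y]
    (c : ℕ) (γ : ℝ) (hγ : 0 < γ)
    (f : X × Y → ℝ) (hf : ∀ p : X × Y, f p = 1 ∨ f p = -1)
    (π : X × Y → ℝ) (hπ : ∀ p : X × Y, π p = 1 ∨ π p = -1)
    (hrect : ConstantOnRectPartition c π)
    (hcorr : 2 * γ ≤
      (∑ x : X, ∑ y : Y, f (x, y) * π (x, y)) /
        ((Fintype.card X : ℝ) * (Fintype.card Y : ℝ))) :
    γ ≤ 2 ^ c * R2 f ^ ((1 : ℝ) / 4) ∧ (γ * ((2 : ℝ) ^ c)⁻¹) ^ 4 ≤ R2 f := by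
  classical
  obtain ⟨k, hk, A, B, hpart, hconst⟩ := hrect
  have hX : (0 : ℝ) < Fintype.card X := by exact_mod_cast Fintype.card_pos
  have hY : (0 : ℝ) < Fintype.card Y := by exact_mod_cast Fintype.card_pos
  have hR := R2_nonneg f
  obtain ⟨r, hr⟩ : ∃ r, r = R2 f ^ ((1 : ℝ) / 4) := ⟨_, rfl⟩
  have hr0 : 0 ≤ r := hr ▸ Real.rpow_nonneg hR _
  have hr4 : r ^ 4 = R2 f := by
    rw [hr, ← Real.rpow_natCast, ← Real.rpow_mul hR]
    norm_num
  -- A rectangle may be empty, in which case any value of modulus at most `1` will do.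
  have hval : ∀ i, ∃ s : ℝ, s ^ 2 ≤ 1 ∧ ∀ p : X × Y, p.1 ∈ A i → p.2 ∈ B i → π p = s := by
    intro i
    by_cases h : ∃ p : X × Y, p.1 ∈ A i ∧ p.2 ∈ B i
    · obtain ⟨p, hp1, hp2⟩ := h
      refine ⟨π p, ?_, fun q hq1 hq2 => hconst i q p hq1 hq2 hp1 hp2⟩
      rcases hπ p with h | h <;> rw [h] <;> norm_num
    · exact ⟨0, by norm_num, fun p h1 h2 => absurd ⟨p, h1, h2⟩ h⟩
  choose s hs1 hs using hval
  let u : Fin k → X → ℝ := fun i x => if x ∈ A i then s i else 0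
  let v : Fin k → Y → ℝ := fun i y => if y ∈ B i then 1 else 0
  have hdecomp : ∀ x y, π (x, y) = ∑ i, u i x * v i y := by
    intro x y
    obtain ⟨i, ⟨hi1, hi2⟩, huniq⟩ := hpart (x, y)
    rw [Finset.sum_eq_single i]
    · simp only [u, v, if_pos hi1, if_pos hi2, mul_one]
      exact hs i (x, y) hi1 hi2
    · intro j _ hj
      by_cases h1 : x ∈ A j
      · have h2 : y ∉ B j := fun h2 => hj (huniq j ⟨h1, h2⟩)
        simp [v, h2]
      · simp [u, h1]
    · simp
  have hsum : ∑ x, ∑ y, f (x, y) * π (x, y) = ∑ i, ∑ x, u i x * ∑ y, v i y * f (x, y) := by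
    rw [Finset.sum_comm (s := (univ : Finset (Fin k)))]
    refine Finset.sum_congr rfl fun x _ => ?_
    simp only [Finset.mul_sum, hdecomp]
    rw [Finset.sum_comm]
    refine Finset.sum_congr rfl fun i _ => Finset.sum_congr rfl fun y _ => by ring
  have hterm : ∀ i, ∑ x, u i x * ∑ y, v i y * f (x, y) ≤
      (Fintype.card X : ℝ) * Fintype.card Y * r := by
    intro i
    have h := sum_mul_rect_pow_four_le f (u i) (v i)
      (fun x => by
        by_cases h : x ∈ A i
        · simpa only [u, if_pos h] using hs1 i
        · simp [u, h])
      (fun y => by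
        by_cases h : y ∈ B i <;> simp [v, h])
    rw [← hr4, ← mul_pow] at h
    rw [← Even.pow_abs (by decide : Even 4)] at h
    exact (le_abs_self _).trans (le_of_pow_le_pow_left₀ (by norm_num) (by positivity) h)
  have hkR : (k : ℝ) ≤ 2 ^ c := by exact_mod_cast hk
  have hmain : 2 * γ ≤ 2 ^ c * r := by
    refine hcorr.trans ?_
    rw [div_le_iff₀ (by positivity), hsum]
    calc _ ≤ ∑ _i : Fin k, (Fintype.card X : ℝ) * Fintype.card Y * r :=
          Finset.sum_le_sum fun i _ => hterm i
      _ = k * ((Fintype.card X : ℝ) * Fintype.card Y * r) := by simp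
      _ ≤ 2 ^ c * ((Fintype.card X : ℝ) * Fintype.card Y * r) :=
          mul_le_mul_of_nonneg_right hkR (by positivity)
      _ = _ := by ring
  have hγr : γ ≤ 2 ^ c * r := by linarith
  rw [← hr]
  refine ⟨hγr, ?_⟩
  rw [← hr4]
  refine pow_le_pow_left₀ (by positivity) ?_ 4
  rw [← div_eq_mul_inv, div_le_iff₀ (by positivity)]
  linarith
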